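/- arXiv:1909.12556 — 3 statements merged into one kernel-verified Lean document; each statement's English description precedes it below -/
import Mathlib

section
/- Let γ > 0, let F : (0,∞) × ℝ → ℝ be C² (playing the role of the interpolated bulk free energy density ρψ), and let W(s) = s²(1−s)². Suppose ρ : ℝ → (0,∞) and φ : ℝ → ℝ are twice continuously differentiable and satisfy, for all x ∈ ℝ, the planar equilibrium equations d/dx[ −F(ρ(x),φ(x)) − (1/γ)W(φ(x)) − (γ/2)φ′(x)² + ρ(x)·∂F/∂ρ(ρ(x),φ(x)) ] = −γ d/dx[ φ′(x)² ] and (1/γ)W′(φ(x)) + ∂F/∂φ(ρ(x),φ(x)) = γ φ″(x). Then the function x ↦ ∂F/∂ρ(ρ(x),φ(x)) is constant on ℝ. -/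
/-!
Along a profile the bulk pressure `ρ ∂F/∂ρ - F` satisfies the Gibbs–Duhem relation: its derivative
is `ρ μ' - φ' ∂F/∂φ`, where `μ` is `∂F/∂ρ` evaluated on the profile. Hence the defect in the
momentum balance is `ρ μ'` minus `φ'` times the defect in the Allen–Cahn equation. When both
equations hold, `ρ μ' = 0`, and division by `ρ` leaves `μ' = 0`.
-/

open Set

section PartialDerivatives

variable {𝕜 E : Type*} [NontriviallyNormedField 𝕜] [NormedAddCommGroup E] [NormedSpace 𝕜 E]
  {F : 𝕜 → 𝕜 → E}

theorem fderiv_uncurry_apply {a b : 𝕜} (hF : DifferentiableAt 𝕜 (Function.uncurry F) (a, b))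
    (u v : 𝕜) :
    fderiv 𝕜 (Function.uncurry F) (a, b) (u, v) =
      u • deriv (fun r => F r b) a + v • deriv (fun s => F a s) b := by
  have hleft : deriv (fun r => F r b) a = fderiv 𝕜 (Function.uncurry F) (a, b) (1, 0) :=
    (hF.hasFDerivAt.comp_hasDerivAt (f := fun r => (r, b)) a
      ((hasDerivAt_id' a).prodMk (hasDerivAt_const a b))).deriv
  have hright : deriv (fun s => F a s) b = fderiv 𝕜 (Function.uncurry F) (a, b) (0, 1) :=
    (hF.hasFDerivAt.comp_hasDerivAt (f := fun s => (a, s)) b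
      ((hasDerivAt_const b a).prodMk (hasDerivAt_id' b))).deriv
  rw [hleft, hright, ← map_smul, ← map_smul, ← map_add]
  simp

theorem hasDerivAt_comp_uncurry {f g : 𝕜 → 𝕜} {f' g' x : 𝕜}
    (hF : DifferentiableAt 𝕜 (Function.uncurry F) (f x, g x))
    (hf : HasDerivAt f f' x) (hg : HasDerivAt g g' x) :
    HasDerivAt (fun y => F (f y) (g y))
      (f' • deriv (fun r => F r (g x)) (f x) + g' • deriv (fun s => F (f x) s) (g x)) x := by
  rw [← fderiv_uncurry_apply hF]
  exact hF.hasFDerivAt.comp_hasDerivAt x (hf.prodMk hg)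

theorem contDiffAt_deriv_left {m n : WithTop ℕ∞} {p : 𝕜 × 𝕜}
    (hF : ContDiffAt 𝕜 n (Function.uncurry F) p) (hmn : m + 1 ≤ n) :
    ContDiffAt 𝕜 m (fun q : 𝕜 × 𝕜 => deriv (fun r => F r q.2) q.1) p := by
  have hslice : ContDiffAt 𝕜 n (Function.uncurry fun (q : 𝕜 × 𝕜) r => F r q.2) (p, p.1) :=
    hF.comp (p, p.1) (contDiffAt_snd.prodMk contDiffAt_fst.snd)
  exact (hslice.fderiv contDiffAt_fst hmn).clm_apply contDiffAt_const

end PartialDerivatives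

theorem gibbs_duhem {𝕜 : Type*} [NontriviallyNormedField 𝕜] {F : 𝕜 → 𝕜 → 𝕜} {ρ φ : 𝕜 → 𝕜}
    {φ' μ' x : 𝕜} (hF : DifferentiableAt 𝕜 (Function.uncurry F) (ρ x, φ x))
    (hρ : DifferentiableAt 𝕜 ρ x) (hφ : HasDerivAt φ φ' x)
    (hμ : HasDerivAt (fun y => deriv (fun r => F r (φ y)) (ρ y)) μ' x) :
    HasDerivAt (fun y => ρ y * deriv (fun r => F r (φ y)) (ρ y) - F (ρ y) (φ y))
      (ρ x * μ' - φ' * deriv (fun s => F (ρ x) s) (φ x)) x := by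
  refine ((hρ.hasDerivAt.mul hμ).sub
    (hasDerivAt_comp_uncurry hF hρ.hasDerivAt hφ)).congr_deriv ?_
  simp only [smul_eq_mul]
  ring

theorem momentum_defect_eq {γ μ' x : ℝ} {F : ℝ → ℝ → ℝ} {W ρ φ : ℝ → ℝ}
    (hF : DifferentiableAt ℝ (Function.uncurry F) (ρ x, φ x)) (hW : DifferentiableAt ℝ W (φ x))
    (hρ : DifferentiableAt ℝ ρ x) (hφ : DifferentiableAt ℝ φ x)
    (hφ' : DifferentiableAt ℝ (deriv φ) x)
    (hμ : HasDerivAt (fun y => deriv (fun r => F r (φ y)) (ρ y)) μ' x) :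
    deriv (fun y => -F (ρ y) (φ y) - W (φ y) - (γ / 2) * (deriv φ y) ^ 2
        + ρ y * deriv (fun r => F r (φ y)) (ρ y)) x + γ * deriv (fun y => (deriv φ y) ^ 2) x =
      ρ x * μ' - deriv φ x *
        (deriv W (φ x) + deriv (fun s => F (ρ x) s) (φ x) - γ * deriv (deriv φ) x) := by
  have hpressure := gibbs_duhem hF hρ hφ.hasDerivAt hμ
  have hpotential : HasDerivAt (fun y => W (φ y)) (deriv W (φ x) * deriv φ x) x :=
    hW.hasDerivAt.comp x hφ.hasDerivAt
  have hgradient : HasDerivAt (fun y => (deriv φ y) ^ 2) (2 * deriv φ x * deriv (deriv φ) x) x := by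
    simpa using hφ'.hasDerivAt.fun_pow 2
  have hflux := (hpressure.fun_sub hpotential).fun_sub (hgradient.const_mul (γ / 2))
  have hregroup : (fun y => -F (ρ y) (φ y) - W (φ y) - (γ / 2) * (deriv φ y) ^ 2
      + ρ y * deriv (fun r => F r (φ y)) (ρ y)) = fun y =>
        ρ y * deriv (fun r => F r (φ y)) (ρ y) - F (ρ y) (φ y) - W (φ y)
          - (γ / 2) * (deriv φ y) ^ 2 := by
    funext y
    ring
  rw [hregroup, hflux.deriv, hgradient.deriv]
  ring

/-- The factor `1/γ` of the potential is absorbed into `W`. -/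
theorem chemical_potential_constant_general
    (γ : ℝ) (F : ℝ → ℝ → ℝ) (W ρ φ : ℝ → ℝ)
    (hF : ∀ x, ContDiffAt ℝ 2 (Function.uncurry F) (ρ x, φ x))
    (hW : Differentiable ℝ W) (hρ : Differentiable ℝ ρ)
    (hφ : Differentiable ℝ φ) (hφ' : Differentiable ℝ (deriv φ)) (hρ0 : ∀ x, ρ x ≠ 0)
    (ode1 : ∀ x : ℝ,
      deriv (fun y => -F (ρ y) (φ y) - W (φ y) - (γ / 2) * (deriv φ y) ^ 2
          + ρ y * deriv (fun r => F r (φ y)) (ρ y)) x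
        = -γ * deriv (fun y => (deriv φ y) ^ 2) x)
    (ode2 : ∀ x : ℝ,
      deriv W (φ x) + deriv (fun s => F (ρ x) s) (φ x) = γ * deriv (deriv φ) x) :
    ∀ x y : ℝ, deriv (fun r => F r (φ x)) (ρ x) = deriv (fun r => F r (φ y)) (ρ y) := by
  have hμ : Differentiable ℝ fun y => deriv (fun r => F r (φ y)) (ρ y) := fun x =>
    ((contDiffAt_deriv_left (hF x) one_add_one_eq_two.le).differentiableAt one_ne_zero).fun_comp' x
      ((hρ x).prodMk (hφ x))
  refine is_const_of_deriv_eq_zero hμ fun x => ?_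
  have hdefect := momentum_defect_eq (γ := γ) ((hF x).differentiableAt two_ne_zero) (hW (φ x))
    (hρ x) (hφ x) (hφ' x) (hμ x).hasDerivAt
  have hmul : ρ x * deriv (fun y => deriv (fun r => F r (φ y)) (ρ y)) x = 0 := by
    linear_combination ode1 x + deriv φ x * ode2 x - hdefect
  exact (mul_eq_zero.mp hmul).resolve_left (hρ0 x)

/-- **Constancy of the generalized chemical potential along a planar equilibrium profile.**
For a planar static equilibrium of the compressible Navier–Stokes–Allen–Cahn model with
free energy density `F(ρ,φ) + (1/γ) W(φ) + (γ/2) φ′²`, the quantity `∂F/∂ρ (ρ(x), φ(x))`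
is constant on `ℝ`. -/
theorem chemical_potential_constant
    (γ : ℝ) (hγ : 0 < γ)
    (F : ℝ → ℝ → ℝ)
    (hF : ContDiffOn ℝ 2 (fun p : ℝ × ℝ => F p.1 p.2) (Ioi (0:ℝ) ×ˢ (univ : Set ℝ)))
    (W : ℝ → ℝ) (hW : W = fun s => s ^ 2 * (1 - s) ^ 2)
    (ρ φ : ℝ → ℝ)
    (hρ : ContDiff ℝ 2 ρ) (hφ : ContDiff ℝ 2 φ)
    (hρpos : ∀ x, 0 < ρ x)
    (ode1 : ∀ x : ℝ,
      deriv (fun y =>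
          -F (ρ y) (φ y) - (1/γ) * W (φ y) - (γ/2) * (deriv φ y) ^ 2
            + ρ y * deriv (fun r => F r (φ y)) (ρ y)) x
        = -γ * deriv (fun y => (deriv φ y) ^ 2) x)
    (ode2 : ∀ x : ℝ,
      (1/γ) * deriv W (φ x) + deriv (fun s => F (ρ x) s) (φ x)
        = γ * deriv (deriv φ) x) :
    ∀ x y : ℝ, deriv (fun r => F r (φ x)) (ρ x) = deriv (fun r => F r (φ y)) (ρ y) := by
  have hF' : ∀ x, ContDiffAt ℝ 2 (Function.uncurry F) (ρ x, φ x) := fun x =>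
    hF.contDiffAt ((isOpen_Ioi.prod isOpen_univ).mem_nhds ⟨hρpos x, mem_univ _⟩)
  have hW' : Differentiable ℝ fun s => (1 / γ) * W s := by
    rw [hW]
    fun_prop
  exact chemical_potential_constant_general γ F (fun s => (1 / γ) * W s) ρ φ hF' hW'
    (hρ.differentiable two_ne_zero) (hφ.differentiable two_ne_zero) hφ.differentiable_deriv_two
    (fun x => (hρpos x).ne') ode1 (by simpa only [deriv_const_mul_field] using ode2)
end

section
/- Let γ > 0, let F : (0,∞) × ℝ → ℝ be C², and let W(s) = s²(1−s)². Suppose ρ : ℝ → (0,∞) and φ : ℝ → ℝ are twice continuously differentiable and satisfy, for all x ∈ ℝ, d/dx[ −F(ρ,φ) − (1/γ)W(φ) − (γ/2)φ′² + ρ·∂F/∂ρ(ρ,φ) ] = −γ d/dx[ φ′² ] and (1/γ)W′(φ) + ∂F/∂φ(ρ,φ) = γ φ″. Assume furthermore the far-field conditions ρ(x) → ρ_V, φ(x) → 0 and φ′(x) → 0 as x → −∞, for some ρ_V > 0 with ∂F/∂ρ(ρ_V, 0) = 0 (i.e. ρ_V is a critical point of the vapor bulk free energy). Then for every x ∈ ℝ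 the equipartition identity holds: (1/γ)W(φ(x)) + F(ρ(x),φ(x)) − F(ρ_V, 0) = (γ/2) φ′(x)². -/
open Set Filter

/-! The Allen–Cahn equation makes `(1/γ) W(φ) + F − (γ/2) φ′²` vary along the profile at the rate
`∂F/∂ρ · ρ′`. Substituted into the momentum balance, this leaves `ρ · (∂F/∂ρ)′ = 0`, so the
chemical potential is constant, equal to its far-field value. A constant chemical potential `c`
turns the first relation into the conservation law
`(1/γ) W(φ) + F − c ρ − (γ/2) φ′² = const`, and the constant is read off in the far field. -/

section Calculus

variable {𝕜 E : Type*} [NontriviallyNormedField 𝕜] [NormedAddCommGroup E] [NormedSpace 𝕜 E]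

lemma hasDerivAt_uncurry_comp {F : 𝕜 → 𝕜 → E} {u v : 𝕜 → 𝕜} {u' v' x : 𝕜}
    (hF : DifferentiableAt 𝕜 (Function.uncurry F) (u x, v x))
    (hu : HasDerivAt u u' x) (hv : HasDerivAt v v' x) :
    HasDerivAt (fun y => F (u y) (v y))
      (u' • deriv (fun r => F r (v x)) (u x) + v' • deriv (fun s => F (u x) s) (v x)) x := by
  have hF' := hF.hasFDerivAt
  have hfst : HasDerivAt (fun r => F r (v x))
      (fderiv 𝕜 (Function.uncurry F) (u x, v x) (1, 0)) (u x) :=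
    hF'.comp_hasDerivAt (u x) (f := fun r => (r, v x))
      ((hasDerivAt_id (u x)).prodMk (hasDerivAt_const (u x) (v x)))
  have hsnd : HasDerivAt (fun s => F (u x) s)
      (fderiv 𝕜 (Function.uncurry F) (u x, v x) (0, 1)) (v x) :=
    hF'.comp_hasDerivAt (v x) (f := fun s => (u x, s))
      ((hasDerivAt_const (v x) (u x)).prodMk (hasDerivAt_id (v x)))
  refine (hF'.comp_hasDerivAt x (hu.prodMk hv)).congr_deriv ?_
  rw [hfst.deriv, hsnd.deriv, ← map_smul, ← map_smul, ← map_add]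
  simp

lemma contDiffAt_deriv_fst {F : 𝕜 → 𝕜 → E} {p : 𝕜 × 𝕜} {m n : WithTop ℕ∞}
    (hF : ContDiffAt 𝕜 n (Function.uncurry F) p) (hmn : m + 1 ≤ n) :
    ContDiffAt 𝕜 m (fun q : 𝕜 × 𝕜 => deriv (fun r => F r q.2) q.1) p := by
  have hswap : ContDiffAt 𝕜 n
      (Function.uncurry fun (q : 𝕜 × 𝕜) (r : 𝕜) => F r q.2) (p, p.1) :=
    hF.comp (p, p.1) (f := fun z : (𝕜 × 𝕜) × 𝕜 => (z.2, z.1.2)) (by fun_prop)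
  exact (hswap.fderiv contDiffAt_fst hmn).clm_apply contDiffAt_const

end Calculus

lemma eq_of_hasDerivAt_zero_of_tendsto {𝕜 E : Type*} [RCLike 𝕜] [NormedAddCommGroup E]
    [NormedSpace 𝕜 E] {f : 𝕜 → E} {l : Filter 𝕜} [l.NeBot] {c : E}
    (hf : ∀ x, HasDerivAt f 0 x) (hl : Tendsto f l (nhds c)) (x : 𝕜) : f x = c := by
  have hconst : f = fun _ => f x := funext fun y =>
    is_const_of_deriv_eq_zero (fun z => (hf z).differentiableAt) (fun z => (hf z).deriv) y x
  rw [hconst] at hl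
  exact tendsto_nhds_unique tendsto_const_nhds hl

/-- The chemical potential `∂F/∂ρ` of the bulk free energy density `F(ρ, φ)`, with the phase
variable `φ` held fixed. -/
noncomputable def chemicalPotential (F : ℝ → ℝ → ℝ) (r s : ℝ) : ℝ :=
  deriv (fun t => F t s) r

section Profile

variable {F : ℝ → ℝ → ℝ} {V ρ φ : ℝ → ℝ} {κ x : ℝ}

lemma differentiableAt_chemicalPotential {p : ℝ × ℝ}
    (hF : ContDiffAt ℝ 2 (Function.uncurry F) p) :
    DifferentiableAt ℝ (Function.uncurry (chemicalPotential F)) p :=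
  (contDiffAt_deriv_fst (m := 1) hF one_add_one_eq_two.le).differentiableAt one_ne_zero

lemma hasDerivAt_energy_sub_gradient_of_allenCahn
    (hF : DifferentiableAt ℝ (Function.uncurry F) (ρ x, φ x)) (hV : DifferentiableAt ℝ V (φ x))
    (hρ : DifferentiableAt ℝ ρ x) (hφ : DifferentiableAt ℝ φ x)
    (hφ' : DifferentiableAt ℝ (deriv φ) x)
    (allenCahn : deriv V (φ x) + deriv (fun s => F (ρ x) s) (φ x) = κ * deriv (deriv φ) x) :
    HasDerivAt (fun y => V (φ y) + F (ρ y) (φ y) - κ / 2 * deriv φ y ^ 2)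
      (chemicalPotential F (ρ x) (φ x) * deriv ρ x) x := by
  have hVφ := hV.hasDerivAt.comp x hφ.hasDerivAt
  have hFρφ := hasDerivAt_uncurry_comp hF hρ.hasDerivAt hφ.hasDerivAt
  have hgrad := (hφ'.hasDerivAt.fun_pow 2).const_mul (κ / 2)
  refine ((hVφ.fun_add hFρφ).fun_sub hgrad).congr_deriv ?_
  simp only [chemicalPotential, smul_eq_mul]
  linear_combination deriv φ x * allenCahn

lemma hasDerivAt_chemicalPotential_zero
    (hF : ContDiffAt ℝ 2 (Function.uncurry F) (ρ x, φ x)) (hV : DifferentiableAt ℝ V (φ x))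
    (hρ : DifferentiableAt ℝ ρ x) (hφ : DifferentiableAt ℝ φ x)
    (hφ' : DifferentiableAt ℝ (deriv φ) x) (hρ_ne : ρ x ≠ 0)
    (momentum : deriv (fun y => -F (ρ y) (φ y) - V (φ y) - κ / 2 * deriv φ y ^ 2
        + ρ y * chemicalPotential F (ρ y) (φ y)) x = -κ * deriv (fun y => deriv φ y ^ 2) x)
    (allenCahn : deriv V (φ x) + deriv (fun s => F (ρ x) s) (φ x) = κ * deriv (deriv φ) x) :
    HasDerivAt (fun y => chemicalPotential F (ρ y) (φ y)) 0 x := by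
  set μ : ℝ → ℝ := fun y => chemicalPotential F (ρ y) (φ y)
  have hμ : HasDerivAt μ (deriv μ x) x :=
    (hasDerivAt_uncurry_comp (differentiableAt_chemicalPotential hF)
      hρ.hasDerivAt hφ.hasDerivAt).differentiableAt.hasDerivAt
  have henergy := hasDerivAt_energy_sub_gradient_of_allenCahn
    (hF.differentiableAt two_ne_zero) hV hρ hφ hφ' allenCahn
  have hgrad : HasDerivAt (fun y => deriv φ y ^ 2) (deriv (fun y => deriv φ y ^ 2) x) x :=
    (hφ'.fun_pow 2).hasDerivAt
  have hsplit : (fun y => -F (ρ y) (φ y) - V (φ y) - κ / 2 * deriv φ y ^ 2 + ρ y * μ y) =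
      fun y => ρ y * μ y - (V (φ y) + F (ρ y) (φ y) - κ / 2 * deriv φ y ^ 2)
        - κ * deriv φ y ^ 2 := by
    funext y
    ring
  have hstress := ((hρ.hasDerivAt.fun_mul hμ).fun_sub henergy).fun_sub (hgrad.const_mul κ)
  rw [← hsplit] at hstress
  have hρμ : ρ x * deriv μ x = 0 := by linear_combination momentum - hstress.deriv
  rwa [(mul_eq_zero.1 hρμ).resolve_left hρ_ne] at hμ

end Profile

theorem equipartition_identity_general {F : ℝ → ℝ → ℝ} {V ρ φ : ℝ → ℝ} {κ ρ₀ φ₀ : ℝ}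
    {l : Filter ℝ} [l.NeBot]
    (hF : ∀ x, ContDiffAt ℝ 2 (Function.uncurry F) (ρ x, φ x))
    (hF₀ : ContDiffAt ℝ 2 (Function.uncurry F) (ρ₀, φ₀))
    (hV : Differentiable ℝ V) (hρ : Differentiable ℝ ρ) (hφ : Differentiable ℝ φ)
    (hφ' : Differentiable ℝ (deriv φ)) (hρ_ne : ∀ x, ρ x ≠ 0)
    (momentum : ∀ x, deriv (fun y => -F (ρ y) (φ y) - V (φ y) - κ / 2 * deriv φ y ^ 2
        + ρ y * chemicalPotential F (ρ y) (φ y)) x = -κ * deriv (fun y => deriv φ y ^ 2) x)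
    (allenCahn : ∀ x,
      deriv V (φ x) + deriv (fun s => F (ρ x) s) (φ x) = κ * deriv (deriv φ) x)
    (hlimρ : Tendsto ρ l (nhds ρ₀)) (hlimφ : Tendsto φ l (nhds φ₀))
    (hlimφ' : Tendsto (deriv φ) l (nhds 0)) (x : ℝ) :
    V (φ x) + F (ρ x) (φ x) - V φ₀ - F ρ₀ φ₀ - chemicalPotential F ρ₀ φ₀ * (ρ x - ρ₀)
      = κ / 2 * deriv φ x ^ 2 := by
  set μ₀ : ℝ := chemicalPotential F ρ₀ φ₀
  have hlim : Tendsto (fun y => (ρ y, φ y)) l (nhds (ρ₀, φ₀)) := hlimρ.prodMk_nhds hlimφ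
  have hpotential (y : ℝ) : chemicalPotential F (ρ y) (φ y) = μ₀ :=
    eq_of_hasDerivAt_zero_of_tendsto
      (fun z => hasDerivAt_chemicalPotential_zero (hF z) (hV _) (hρ z) (hφ z) (hφ' z) (hρ_ne z)
        (momentum z) (allenCahn z))
      ((differentiableAt_chemicalPotential hF₀).continuousAt.tendsto.comp hlim) y
  have hconserved (y : ℝ) : HasDerivAt
      (fun z => V (φ z) + F (ρ z) (φ z) - κ / 2 * deriv φ z ^ 2 - μ₀ * ρ z) 0 y := by
    have henergy := hasDerivAt_energy_sub_gradient_of_allenCahn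
      ((hF y).differentiableAt two_ne_zero) (hV _) (hρ y) (hφ y) (hφ' y) (allenCahn y)
    refine (henergy.fun_sub ((hρ y).hasDerivAt.const_mul μ₀)).congr_deriv ?_
    rw [hpotential y, sub_self]
  have hfar : Tendsto (fun z => V (φ z) + F (ρ z) (φ z) - κ / 2 * deriv φ z ^ 2 - μ₀ * ρ z) l
      (nhds (V φ₀ + F ρ₀ φ₀ - κ / 2 * 0 ^ 2 - μ₀ * ρ₀)) :=
    ((((hV φ₀).continuousAt.tendsto.comp hlimφ).add (hF₀.continuousAt.tendsto.comp hlim)).sub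
      ((hlimφ'.pow 2).const_mul (κ / 2))).sub (hlimρ.const_mul μ₀)
  linear_combination eq_of_hasDerivAt_zero_of_tendsto hconserved hfar x

/-- **Equipartition identity for a planar equilibrium profile.**
For a planar static equilibrium of the compressible Navier–Stokes–Allen–Cahn model with
free energy density `F(ρ,φ) + (1/γ) W(φ) + (γ/2) φ′²`, with far-field vapor state
`(ρ_V, 0)` at `x → −∞` and `∂F/∂ρ(ρ_V,0) = 0`, one has
`(1/γ) W(φ) + F(ρ,φ) − F(ρ_V,0) = (γ/2) φ′²` everywhere. -/
theorem equipartition_identity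
    (γ : ℝ) (hγ : 0 < γ)
    (F : ℝ → ℝ → ℝ)
    (hF : ContDiffOn ℝ 2 (fun p : ℝ × ℝ => F p.1 p.2) (Ioi (0:ℝ) ×ˢ (univ : Set ℝ)))
    (W : ℝ → ℝ) (hW : W = fun s => s ^ 2 * (1 - s) ^ 2)
    (ρ φ : ℝ → ℝ)
    (hρ : ContDiff ℝ 2 ρ) (hφ : ContDiff ℝ 2 φ)
    (hρpos : ∀ x, 0 < ρ x)
    (ode1 : ∀ x : ℝ,
      deriv (fun y =>
          -F (ρ y) (φ y) - (1/γ) * W (φ y) - (γ/2) * (deriv φ y) ^ 2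
            + ρ y * deriv (fun r => F r (φ y)) (ρ y)) x
        = -γ * deriv (fun y => (deriv φ y) ^ 2) x)
    (ode2 : ∀ x : ℝ,
      (1/γ) * deriv W (φ x) + deriv (fun s => F (ρ x) s) (φ x)
        = γ * deriv (deriv φ) x)
    (ρV : ℝ) (hρV : 0 < ρV)
    (hlimρ : Tendsto ρ atBot (nhds ρV))
    (hlimφ : Tendsto φ atBot (nhds 0))
    (hlimφ' : Tendsto (deriv φ) atBot (nhds 0))
    (hcrit : deriv (fun r => F r 0) ρV = 0) :
    ∀ x : ℝ,
      (1/γ) * W (φ x) + F (ρ x) (φ x) - F ρV 0 = (γ/2) * (deriv φ x) ^ 2 := by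
  have hF' (r s : ℝ) (hr : 0 < r) : ContDiffAt ℝ 2 (Function.uncurry F) (r, s) :=
    hF.contDiffAt ((isOpen_Ioi.prod isOpen_univ).mem_nhds ⟨hr, mem_univ s⟩)
  subst hW
  simpa [chemicalPotential, hcrit] using equipartition_identity_general
    (V := fun s => 1 / γ * (s ^ 2 * (1 - s) ^ 2)) (fun x => hF' _ _ (hρpos x)) (hF' _ _ hρV)
    (by fun_prop) (hρ.differentiable two_ne_zero) (hφ.differentiable two_ne_zero)
    hφ.differentiable_deriv_two (fun x => (hρpos x).ne') ode1
    (fun x => by rw [deriv_const_mul_field]; exact ode2 x) hlimρ hlimφ hlimφ'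
end

section
/- Let γ > 0, F : (0,∞) × ℝ → ℝ be C², W(s) = s²(1−s)², and let ρ : ℝ → (0,∞), φ : ℝ → ℝ be a twice continuously differentiable planar equilibrium profile satisfying the equipartition identity (1/γ)W(φ(x)) + F(ρ(x),φ(x)) − c̄ = (γ/2) φ′(x)² for all x ∈ ℝ, where c̄ := F(ρ_V,0) is the common bulk free energy value, and with φ(x) → 0 as x → −∞ and φ(x) → 1 as x → +∞. Assume moreover that φ′(x) > 0 for all x, so that φ : ℝ → (0,1) is a strictly increasing bijection, and let R : (0,1) → (0,∞) be defined by R := ρ ∘ φ⁻¹. If x ↦ φ′(x)² is integrable on ℝ, then ∫_{−∞}^{∞} γ φ′(x)² dx = √2 ∫_0^1 √( W(s) + γ (F(R(s), s) − c̄) ) ds. -/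
open Set Filter MeasureTheory

/-!
The equipartition identity turns `√(W + γ (F - c))`, taken along the profile, into `(γ / √2) φ'`.
Hence `γ φ'² dx = √2 √(W + γ (F - c)) φ' dx`, and `s = φ x` is an admissible change of variables
because the monotone profile sweeps out the interval between its two limits. Monotonicity is enough:
intervals where `φ` is constant contribute nothing, since `φ' = 0` there.
-/

section MonotoneRange

variable {X Y : Type*} [TopologicalSpace X] [PreconnectedSpace X] [Preorder X] [Nonempty X]
  [IsDirectedOrder X] [IsCodirectedOrder X] [TopologicalSpace Y] [LinearOrder Y]
  [OrderClosedTopology Y] {f : X → Y} {a b : Y}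

theorem Ioo_subset_range_of_tendsto (hf : Continuous f) (ha : Tendsto f atBot (nhds a))
    (hb : Tendsto f atTop (nhds b)) : Ioo a b ⊆ range f := by
  simpa only [image_univ] using isPreconnected_univ.intermediate_value_Ioo
    (by simp) (by simp) hf.continuousOn ha hb

theorem range_ae_eq_Ioc_of_monotone_of_tendsto [MeasurableSpace Y] {μ : Measure Y}
    [NullSingletonClass μ] (hf : Continuous f) (hmono : Monotone f)
    (ha : Tendsto f atBot (nhds a)) (hb : Tendsto f atTop (nhds b)) : range f =ᵐ[μ] Ioc a b := by
  have range_subset : range f ⊆ Icc a b :=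
    range_subset_iff.2 fun x => ⟨hmono.le_of_tendsto ha x, hmono.ge_of_tendsto hb x⟩
  refine EventuallyLE.antisymm ?_ ?_
  · exact range_subset.eventuallyLE.trans Ioc_ae_eq_Icc.symm.le
  · exact Ioo_ae_eq_Ioc.symm.le.trans (Ioo_subset_range_of_tendsto hf ha hb).eventuallyLE

end MonotoneRange

section ChangeOfVariables

variable {E : Type*} [NormedAddCommGroup E] [NormedSpace ℝ E] {f f' : ℝ → ℝ} {a b : ℝ}

theorem intervalIntegrable_iff_integrable_deriv_smul_of_tendsto (hf : ∀ x, HasDerivAt f (f' x) x)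
    (hmono : Monotone f) (ha : Tendsto f atBot (nhds a)) (hb : Tendsto f atTop (nhds b))
    (g : ℝ → E) :
    IntervalIntegrable g volume a b ↔ Integrable fun x => f' x • g (f x) := by
  have hcont : Continuous f := continuous_iff_continuousAt.2 fun x => (hf x).continuousAt
  have hab : a ≤ b := (hmono.le_of_tendsto ha 0).trans (hmono.ge_of_tendsto hb 0)
  rw [intervalIntegrable_iff_integrableOn_Ioc_of_le hab,
    ← integrableOn_congr_set_ae (range_ae_eq_Ioc_of_monotone_of_tendsto hcont hmono ha hb),
    ← image_univ, integrableOn_image_iff_integrableOn_deriv_smul_of_monotoneOn MeasurableSet.univ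
      (fun x _ => (hf x).hasDerivWithinAt) (hmono.monotoneOn univ), integrableOn_univ]

theorem intervalIntegral_eq_integral_deriv_smul_of_tendsto (hf : ∀ x, HasDerivAt f (f' x) x)
    (hmono : Monotone f) (ha : Tendsto f atBot (nhds a)) (hb : Tendsto f atTop (nhds b))
    (g : ℝ → E) :
    ∫ s in a..b, g s = ∫ x, f' x • g (f x) := by
  have hcont : Continuous f := continuous_iff_continuousAt.2 fun x => (hf x).continuousAt
  have hab : a ≤ b := (hmono.le_of_tendsto ha 0).trans (hmono.ge_of_tendsto hb 0)
  rw [intervalIntegral.integral_of_le hab,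
    ← setIntegral_congr_set (range_ae_eq_Ioc_of_monotone_of_tendsto hcont hmono ha hb),
    ← image_univ, integral_image_eq_integral_deriv_smul_of_monotoneOn MeasurableSet.univ
      (fun x _ => (hf x).hasDerivWithinAt) (hmono.monotoneOn univ), setIntegral_univ]

end ChangeOfVariables

theorem sqrt_eq_div_sqrt_two_mul_of_equipartition {γ w e p : ℝ} (hγ : 0 < γ) (hp : 0 ≤ p)
    (equip : (1 / γ) * w + e = (γ / 2) * p ^ 2) :
    √(w + γ * e) = γ / √2 * p := by
  have square : w + γ * e = (γ / √2 * p) ^ 2 := by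
    calc w + γ * e = γ * ((1 / γ) * w + e) := by field_simp
      _ = γ * ((γ / 2) * p ^ 2) := by rw [equip]
      _ = (γ / √2 * p) ^ 2 := by
        rw [mul_pow, div_pow, Real.sq_sqrt zero_le_two]
        ring
  rw [square, Real.sqrt_sq (by positivity)]

theorem surface_tension_formula_general {D : Type*} {γ a b c : ℝ} (hγ : 0 < γ)
    {F : D → ℝ → ℝ} {W φ φ' : ℝ → ℝ} {ρ R : ℝ → D}
    (equip : ∀ x, (1 / γ) * W (φ x) + F (ρ x) (φ x) - c = (γ / 2) * φ' x ^ 2)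
    (hφ : ∀ x, HasDerivAt φ (φ' x) x) (hφ' : ∀ x, 0 ≤ φ' x)
    (ha : Tendsto φ atBot (nhds a)) (hb : Tendsto φ atTop (nhds b))
    (hR : ∀ x, R (φ x) = ρ x) (hint : Integrable fun x => φ' x ^ 2) :
    IntervalIntegrable (fun s => √(W s + γ * (F (R s) s - c))) volume a b ∧
      ∫ x, γ * φ' x ^ 2 = √2 * ∫ s in a..b, √(W s + γ * (F (R s) s - c)) := by
  have hmono : Monotone φ := monotone_of_hasDerivAt_nonneg hφ hφ'
  have integrand_eq (x : ℝ) :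
      φ' x • √(W (φ x) + γ * (F (R (φ x)) (φ x) - c)) = γ / √2 * φ' x ^ 2 := by
    rw [hR, sqrt_eq_div_sqrt_two_mul_of_equipartition hγ (hφ' x)
      ((add_sub_assoc _ _ _).symm.trans (equip x)), smul_eq_mul]
    ring
  constructor
  · rw [intervalIntegrable_iff_integrable_deriv_smul_of_tendsto hφ hmono ha hb]
    simpa only [integrand_eq] using hint.const_mul (γ / √2)
  · rw [intervalIntegral_eq_integral_deriv_smul_of_tendsto hφ hmono ha hb]
    simp only [integrand_eq, integral_const_mul]
    field_simp

/-- **Surface tension formula via the phase-field variable.**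
For a planar equilibrium profile satisfying the equipartition identity and connecting
`φ = 0` (density `ρ_V`) at `−∞` to `φ = 1` at `+∞`, with `φ′ > 0` everywhere so that
`φ : ℝ → (0,1)` is a strictly increasing bijection, and with `R = ρ ∘ φ⁻¹`, one has
`∫ γ φ′² dx = √2 ∫₀¹ √(W(s) + γ (F(R(s), s) − c̄)) ds` where `c̄ = F(ρ_V, 0)`. -/
theorem surface_tension_formula
    (γ : ℝ) (hγ : 0 < γ)
    (F : ℝ → ℝ → ℝ)
    (hF : ContDiffOn ℝ 2 (fun p : ℝ × ℝ => F p.1 p.2) (Ioi (0:ℝ) ×ˢ (univ : Set ℝ)))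
    (W : ℝ → ℝ) (hW : W = fun s => s ^ 2 * (1 - s) ^ 2)
    (ρ φ : ℝ → ℝ)
    (hρ : ContDiff ℝ 2 ρ) (hφ : ContDiff ℝ 2 φ)
    (hρpos : ∀ x, 0 < ρ x)
    (ρV : ℝ) (hρV : 0 < ρV)
    (equip : ∀ x : ℝ,
      (1/γ) * W (φ x) + F (ρ x) (φ x) - F ρV 0 = (γ/2) * (deriv φ x) ^ 2)
    (hlimφ : Tendsto φ atBot (nhds 0))
    (hlimφtop : Tendsto φ atTop (nhds 1))
    (hφ'pos : ∀ x, 0 < deriv φ x)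
    (hmono : StrictMono φ)
    (hbij : BijOn φ univ (Ioo (0:ℝ) 1))
    (R : ℝ → ℝ)
    (hR : ∀ x : ℝ, R (φ x) = ρ x)
    (hRpos : ∀ s ∈ Ioo (0:ℝ) 1, 0 < R s)
    (hint : Integrable (fun x => (deriv φ x) ^ 2)) :
    (∫ x : ℝ, γ * (deriv φ x) ^ 2)
      = Real.sqrt 2 * ∫ s in (0:ℝ)..1, Real.sqrt (W s + γ * (F (R s) s - F ρV 0)) := by
  exact (surface_tension_formula_general hγ equip
    (fun x => (hφ.differentiable two_ne_zero x).hasDerivAt) (fun x => (hφ'pos x).le)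
    hlimφ hlimφtop hR hint).2
end
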